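/- Let r be a positive even integer. Let V be an F-vector space of dimension r+3 and Q a nondegenerate quadratic form on V of Witt defect 1 (a parabolic quadric). Let S be a spread of Q and let W be a hyperplane of V such that the restriction of Q to W is a nondegenerate quadratic form of Witt defect 0 (a hyperbolic hyperplane section). Then exactly 2 members of S are contained in W. -/

import Mathlib

open Module Submodule

section Defs

variable {F : Type*} [Field F] {V : Type*} [AddCommGroup V] [Module F V]

/-- A subspace is totally singular if the quadratic form vanishes on it. -/
def IsTotallySingular (Q : QuadraticForm F V) (W : Submodule F V) : Prop :=
  ∀ x ∈ W, Q x = 0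

/-- The Witt index: maximal dimension of a totally singular subspace. -/
noncomputable def wittIndex (Q : QuadraticForm F V) : ℕ :=
  sSup {n : ℕ | ∃ W : Submodule F V, IsTotallySingular Q W ∧ Module.finrank F ↥W = n}

/-- Nondegeneracy: the only singular vector orthogonal to everything is `0`. -/
def QuadNondeg (Q : QuadraticForm F V) : Prop :=
  ∀ v : V, Q v = 0 → (∀ x : V, QuadraticMap.polar Q v x = 0) → v = 0

/-- A generator: totally singular subspace of dimension the Witt index. -/
def IsGenerator (Q : QuadraticForm F V) (G : Submodule F V) : Prop :=
  IsTotallySingular Q G ∧ Module.finrank F ↥G = wittIndex Q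

/-- A spread of `Q`. -/
def IsSpread (Q : QuadraticForm F V) (S : Set (Submodule F V)) : Prop :=
  (∀ G ∈ S, IsGenerator Q G) ∧
  (∀ G ∈ S, ∀ G' ∈ S, G ≠ G' → G ⊓ G' = ⊥) ∧
  (∀ v : V, Q v = 0 → ∃ G ∈ S, v ∈ G)

/-- The perp of a vector with respect to the polar form of `Q`. -/
def vecPerp (Q : QuadraticForm F V) (u : V) : Submodule F V :=
  LinearMap.ker (QuadraticMap.polarBilin Q u)

/-- The perp of a subspace with respect to the polar form of `Q`. -/
def subPerp (Q : QuadraticForm F V) (G : Submodule F V) : Submodule F V :=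
  ⨅ g ∈ G, vecPerp Q g

/-- Hyperbolic (e = 0), parabolic (e = 1) or elliptic (e = 2) affine vector space
partition for `(U, H, Q, Pgen)`. -/
def IsAvsp [Fintype F] (e r : ℕ) {U : Type*} [AddCommGroup U] [Module F U]
    (H : Submodule F U) (Q : QuadraticForm F ↥H) (Pgen : Submodule F ↥H)
    (P : Set (Submodule F U)) : Prop :=
  P.ncard = Fintype.card F ^ ((r + e + 1) / 2) ∧
  (∀ S ∈ P, Module.finrank F ↥S = (r + 3 - e) / 2 ∧ ¬ S ≤ H) ∧
  (∀ L : Submodule F U, Module.finrank F ↥L = 1 → ¬ L ≤ H → ∃! S, S ∈ P ∧ L ≤ S) ∧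
  (∀ S ∈ P, IsGenerator Q (S.comap H.subtype) ∧ S.comap H.subtype ⊓ Pgen = ⊥) ∧
  (∀ S ∈ P, ∀ T ∈ P, S ≠ T → S.comap H.subtype ≠ T.comap H.subtype) ∧
  (∀ S ∈ P, ∀ T ∈ P, S ≠ T → Module.finrank F ↥(S ⊓ T) ≤ 1) ∧
  (∀ S ∈ P, ∀ T ∈ P, S ≠ T →
    Module.finrank F ↥(S.comap H.subtype ⊓ T.comap H.subtype) = 1 →
      QuadNondeg (Q.comp ((S ⊔ T).comap H.subtype).subtype) ∧
      Module.finrank F ↥((S ⊔ T).comap H.subtype) =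
        2 * wittIndex (Q.comp ((S ⊔ T).comap H.subtype).subtype))

end Defs

/-!
Let `Q` have Witt index `n` and let `U` be a generator. For `v ∉ U^⊥` the form `Q` is a nonconstant
affine function on the coset `v + U`, for `v ∈ U^⊥` it is constant there, and the constant vanishes
only if `v ∈ U`. Hence a nondegenerate form of Witt defect `e` over a field with `q` elements has
`(q^n - 1)(q^(n+e-1) + 1)` nonzero singular vectors, and, if `n > 0`, its spreads have
`q^(n+e-1) + 1` members.

If `V` has defect `e + 1` and the hyperplane `W` has defect `e` and the same Witt index, the spread
partitions the nonzero singular vectors of `W` into `q^n - 1` vectors for each of the `a` members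
inside `W` and `q^(n-1) - 1` vectors for each other member. Comparing with the count on `W` gives
`a (q^n - q^(n-1)) = (q^e + 1)(q^n - q^(n-1))`.
-/

section Counting

theorem natCard_mul_natCard_fiber_of_surjective {A B : Type*} [AddGroup A] [AddGroup B]
    {f : A →+ B} (hf : Function.Surjective f) (b : B) :
    Nat.card B * Nat.card {a // f a = b} = Nat.card A := by
  have hindex : f.ker.index = Nat.card B := by
    rw [AddSubgroup.index_ker, AddMonoidHom.range_eq_top.2 hf, AddSubgroup.card_top]
  rw [← f.ker.card_mul_index, hindex, mul_comm]
  exact congrArg (· * _) (Nat.card_congr (AddMonoidHom.fiberEquivKerOfSurjective hf b))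

theorem sum_natCard_subtype_add {V ι : Type*} [AddGroup V] [Fintype V] [Finite ι] (f : ι → V)
    (p : V → Prop) :
    ∑ v, Nat.card {i // p (v + f i)} = Nat.card ι * Nat.card {v // p v} := by
  classical
  have := Fintype.ofFinite ι
  have htranslate (i : ι) : ∑ v, (if p (v + f i) then 1 else 0) = ∑ v, if p v then 1 else 0 :=
    Equiv.sum_comp (Equiv.addRight (f i)) fun v => if p v then 1 else 0
  simp only [Nat.card_eq_fintype_card, Fintype.card_subtype, Finset.card_filter]
  rw [Finset.sum_comm, Finset.sum_congr rfl fun i _ => htranslate i, Finset.sum_const,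
    Finset.card_univ, smul_eq_mul]

theorem eq_pow_add_one_of_add_eq_of_mul_add_mul_eq {q m e a b : ℕ} (hq : 1 < q)
    (hadd : a + b = q ^ (m + 1 + e) + 1)
    (hmul : a * (q ^ (m + 1) - 1) + b * (q ^ m - 1) = (q ^ (m + 1) - 1) * (q ^ (m + e) + 1)) :
    a = q ^ e + 1 := by
  have hpow (k : ℕ) : 1 ≤ q ^ k := Nat.one_le_pow _ _ (by omega)
  zify [hpow] at hadd hmul ⊢
  have hcancel : (q : ℤ) ^ (m + 1) - q ^ m ≠ 0 :=
    sub_ne_zero.2 (mod_cast (Nat.pow_lt_pow_succ hq).ne')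
  refine mul_right_cancel₀ hcancel ?_
  linear_combination hmul - (q ^ m - 1 : ℤ) * hadd

end Counting

section Hyperplane

variable {F V : Type*} [Field F] [AddCommGroup V] [Module F V] [FiniteDimensional F V]

theorem finrank_comap_subtype_add_one_of_not_le {G W : Submodule F V}
    (hW : finrank F V = finrank F W + 1) (hG : ¬ G ≤ W) :
    finrank F (G.comap W.subtype) + 1 = finrank F G := by
  have hinf : finrank F (G.comap W.subtype) = finrank F ↥(W ⊓ G) := by
    rw [← finrank_map_subtype_eq, map_comap_subtype]
  have hlt : finrank F W < finrank F ↥(W ⊔ G) := finrank_lt_finrank_of_lt (left_lt_sup.2 hG)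
  have hle := (W ⊔ G).finrank_le
  have hadd := finrank_sup_add_finrank_inf_eq W G
  omega

end Hyperplane

section TotallySingular

variable {F V : Type*} [Field F] [AddCommGroup V] [Module F V] {Q : QuadraticForm F V}
  {U W : Submodule F V}

theorem mem_subPerp {v : V} : v ∈ subPerp Q U ↔ ∀ u ∈ U, QuadraticMap.polar Q u v = 0 := by
  simp only [subPerp, vecPerp, mem_iInf, LinearMap.mem_ker, QuadraticMap.polarBilin_apply_apply]

theorem IsTotallySingular.map_add (hU : IsTotallySingular Q U) (v : V) {u : V} (hu : u ∈ U) :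
    Q (v + u) = Q v + QuadraticMap.polar Q v u := by
  rw [QuadraticMap.map_add Q, hU u hu, add_zero]

theorem IsTotallySingular.le_subPerp (hU : IsTotallySingular Q U) : U ≤ subPerp Q U := by
  refine fun v hv => mem_subPerp.2 fun u hu => ?_
  rw [QuadraticMap.polar, hU _ (U.add_mem hu hv), hU u hu, hU v hv, sub_zero, sub_zero]

theorem IsTotallySingular.sup_span_singleton (hU : IsTotallySingular Q U) {v : V} (hv : Q v = 0)
    (hvU : v ∈ subPerp Q U) : IsTotallySingular Q (U ⊔ F ∙ v) := by
  intro x hx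
  obtain ⟨u, hu, y, hy, rfl⟩ := mem_sup.1 hx
  obtain ⟨c, rfl⟩ := mem_span_singleton.1 hy
  rw [QuadraticMap.map_add Q, hU u hu, QuadraticMap.map_smul, hv, QuadraticMap.polar_smul_right,
    mem_subPerp.1 hvU u hu, smul_zero, smul_zero, add_zero, add_zero]

theorem IsGenerator.map_subtype {U : Submodule F W} (hU : IsGenerator (Q.comp W.subtype) U)
    (hindex : wittIndex (Q.comp W.subtype) = wittIndex Q) : IsGenerator Q (U.map W.subtype) := by
  refine ⟨?_, by rw [finrank_map_subtype_eq, hU.2, hindex]⟩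
  rintro _ ⟨u, hu, rfl⟩
  exact hU.1 u hu

variable [FiniteDimensional F V]

theorem bddAbove_finrank_isTotallySingular (Q : QuadraticForm F V) :
    BddAbove {n : ℕ | ∃ W : Submodule F V, IsTotallySingular Q W ∧ finrank F W = n} := by
  refine ⟨finrank F V, ?_⟩
  rintro _ ⟨W, -, rfl⟩
  exact W.finrank_le

theorem IsTotallySingular.finrank_le_wittIndex (hU : IsTotallySingular Q U) :
    finrank F U ≤ wittIndex Q :=
  le_csSup (bddAbove_finrank_isTotallySingular Q) ⟨U, hU, rfl⟩

theorem exists_isGenerator (Q : QuadraticForm F V) : ∃ U, IsGenerator Q U := by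
  have hbot : IsTotallySingular Q ⊥ := by
    rintro x hx
    rw [(mem_bot F).1 hx, QuadraticMap.map_zero]
  have hne : {n : ℕ | ∃ W : Submodule F V, IsTotallySingular Q W ∧ finrank F W = n}.Nonempty :=
    ⟨_, ⊥, hbot, rfl⟩
  exact Nat.sSup_mem hne (bddAbove_finrank_isTotallySingular Q)

theorem IsGenerator.mem_of_mem_subPerp (hU : IsGenerator Q U) {v : V} (hv : Q v = 0)
    (hvU : v ∈ subPerp Q U) : v ∈ U := by
  have hle : finrank F ↥(U ⊔ F ∙ v) ≤ finrank F U :=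
    hU.2 ▸ (hU.1.sup_span_singleton hv hvU).finrank_le_wittIndex
  rw [eq_of_le_of_finrank_le le_sup_left hle]
  exact mem_sup_right (mem_span_singleton_self v)

theorem QuadNondeg.of_comp_subtype (hW : QuadNondeg (Q.comp W.subtype))
    (hindex : wittIndex (Q.comp W.subtype) = wittIndex Q) : QuadNondeg Q := by
  intro v hv hperp
  obtain ⟨U, hU⟩ := exists_isGenerator (Q.comp W.subtype)
  have hvU : v ∈ U.map W.subtype := (hU.map_subtype hindex).mem_of_mem_subPerp hv <|
    mem_subPerp.2 fun u _ => (QuadraticMap.polar_comm Q u v).trans (hperp u)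
  obtain ⟨w, -, rfl⟩ := hvU
  rw [hW w hv fun x => hperp x, _root_.map_zero]

theorem QuadNondeg.finrank_add_finrank_subPerp (hQ : QuadNondeg Q) (hU : IsTotallySingular Q U) :
    finrank F U + finrank F (subPerp Q U) = finrank F V := by
  have hortho : subPerp Q U = LinearMap.BilinForm.orthogonal Q.polarBilin U :=
    Submodule.ext fun _ => mem_subPerp
  have hker : U ⊓ LinearMap.ker Q.polarBilin = ⊥ := by
    rw [eq_bot_iff]
    rintro v ⟨hvU, hv⟩
    exact (mem_bot F).2 (hQ v (hU v hvU) (LinearMap.congr_fun hv))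
  rw [hortho, LinearMap.BilinForm.finrank_add_finrank_orthogonal', hker, finrank_bot, add_zero]

end TotallySingular

section SingularVectors

variable {F V : Type*} [Field F] [AddCommGroup V] [Module F V] {Q : QuadraticForm F V}
  {U : Submodule F V}

/-- The nonzero singular vectors of `Q`, which span the points of the quadric of `Q`. The zero
vector is left out so that the members of a spread induce a partition of this set. -/
def singularVectors (Q : QuadraticForm F V) : Set V :=
  {v | Q v = 0 ∧ v ≠ 0}

theorem IsTotallySingular.natCard_mul_natCard_translate_singular (hU : IsTotallySingular Q U)
    {v : V} (hv : v ∉ subPerp Q U) :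
    Nat.card F * Nat.card {u : U // Q (v + u) = 0} = Nat.card U := by
  set f : U →ₗ[F] F := (Q.polarBilin v).comp U.subtype
  have hf : f ≠ 0 := by
    refine fun h => hv (mem_subPerp.2 fun u hu => ?_)
    rw [QuadraticMap.polar_comm]
    exact LinearMap.congr_fun h ⟨u, hu⟩
  have hfiber (u : U) : Q (v + u) = 0 ↔ f.toAddMonoidHom u = -Q v := by
    rw [hU.map_add v u.2, add_comm, ← eq_neg_iff_add_eq_zero]
    rfl
  simp only [hfiber]
  exact natCard_mul_natCard_fiber_of_surjective (LinearMap.surjective hf) _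

variable [FiniteDimensional F V]

open scoped Classical in
theorem IsGenerator.natCard_translate_singular (hU : IsGenerator Q U) {v : V}
    (hv : v ∈ subPerp Q U) :
    Nat.card {u : U // Q (v + u) = 0} = if v ∈ U then Nat.card U else 0 := by
  have hconst (u : U) : Q (v + u) = Q v := by
    rw [hU.1.map_add v u.2, QuadraticMap.polar_comm, mem_subPerp.1 hv u u.2, add_zero]
  simp only [hconst]
  split_ifs with hvU
  · exact Nat.card_congr (Equiv.subtypeUnivEquiv fun _ => hU.1 v hvU)
  · have : IsEmpty {_u : U // Q v = 0} := ⟨fun u => hvU (hU.mem_of_mem_subPerp u.2 hv)⟩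
    exact Nat.card_of_isEmpty

theorem ncard_coe_sdiff_zero (U : Submodule F V) :
    ((U : Set V) \ {0}).ncard = Nat.card F ^ finrank F U - 1 := by
  rw [Set.ncard_sdiff_singleton_of_mem U.zero_mem, ← Module.natCard_eq_pow_finrank]
  rfl

variable [Finite F]

theorem IsGenerator.natCard_mul_natCard_singular_add_natCard_subPerp (hU : IsGenerator Q U) :
    Nat.card F * Nat.card {v // Q v = 0} + Nat.card (subPerp Q U) =
      Nat.card F * Nat.card U + Nat.card V := by
  classical
  have : Finite V := Module.finite_of_finite F
  have := Fintype.ofFinite V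
  have hcoset (v : V) : Nat.card F * Nat.card {u : U // Q (v + u) = 0} +
      (if v ∈ subPerp Q U then Nat.card U else 0) =
      (if v ∈ U then Nat.card F * Nat.card U else 0) + Nat.card U := by
    by_cases hv : v ∈ subPerp Q U
    · rw [hU.natCard_translate_singular hv, if_pos hv, mul_ite, mul_zero]
    · rw [hU.1.natCard_mul_natCard_translate_singular hv, if_neg hv,
        if_neg (fun hvU => hv (hU.1.le_subPerp hvU)), add_comm]
  have hindicator (A : Submodule F V) (k : ℕ) :
      ∑ v : V, (if v ∈ A then k else 0) = Nat.card A * k := by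
    rw [← Finset.sum_filter, Finset.sum_const, smul_eq_mul, ← Fintype.card_subtype,
      ← Nat.card_eq_fintype_card]
  have hsum := Finset.sum_congr (rfl : Finset.univ = _) fun v _ => hcoset v
  simp only [Finset.sum_add_distrib, hindicator, ← Finset.mul_sum, Finset.sum_const,
    Finset.card_univ, smul_eq_mul, sum_natCard_subtype_add (fun u : U => (u : V)) (Q · = 0),
    ← Nat.card_eq_fintype_card] at hsum
  refine Nat.eq_of_mul_eq_mul_left (Nat.card_pos (α := U)) ?_
  linarith

theorem ncard_singularVectors_add_one (Q : QuadraticForm F V) :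
    (singularVectors Q).ncard + 1 = Nat.card {v // Q v = 0} := by
  have : Finite V := Module.finite_of_finite F
  exact Set.ncard_sdiff_singleton_add_one (s := {v | Q v = 0}) (QuadraticMap.map_zero Q)

theorem QuadNondeg.ncard_singularVectors (hQ : QuadNondeg Q) {e : ℕ}
    (he : finrank F V = 2 * wittIndex Q + e) :
    (singularVectors Q).ncard =
      (Nat.card F ^ wittIndex Q - 1) * (Nat.card F ^ (wittIndex Q + e - 1) + 1) := by
  obtain ⟨U, hU⟩ := exists_isGenerator Q
  have hperp : finrank F (subPerp Q U) = wittIndex Q + e := by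
    have := hQ.finrank_add_finrank_subPerp hU.1
    have := hU.2
    omega
  have hcount := hU.natCard_mul_natCard_singular_add_natCard_subPerp
  rw [← ncard_singularVectors_add_one, Module.natCard_eq_pow_finrank (K := F) (V := U),
    Module.natCard_eq_pow_finrank (K := F) (V := V),
    Module.natCard_eq_pow_finrank (K := F) (V := subPerp Q U), hperp, hU.2, he] at hcount
  have hq : 0 < Nat.card F := Nat.card_pos
  generalize wittIndex Q = n at hcount ⊢
  obtain _ | m := n
  · simpa [hq.ne'] using hcount
  · obtain ⟨A, hA⟩ := Nat.exists_eq_add_one.2 (pow_pos hq (m + 1))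
    rw [show 2 * (m + 1) + e = m + 1 + (m + e + 1) by ring, pow_add _ (m + 1) (m + e + 1), hA,
      show m + 1 + e = m + e + 1 by ring, pow_succ _ (m + e)] at hcount
    rw [hA, Nat.add_sub_cancel, show m + 1 + e - 1 = m + e by omega]
    refine Nat.eq_of_mul_eq_mul_left hq ?_
    linarith

end SingularVectors

section Spread

variable {F V : Type*} [Field F] [Finite F] [AddCommGroup V] [Module F V]
  {Q : QuadraticForm F V} {S : Finset (Submodule F V)}

theorem IsSpread.ncard_singularVectors_comp {E : Type*} [AddCommGroup E] [Module F E]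
    [FiniteDimensional F E] (hS : IsSpread Q S) {f : E →ₗ[F] V} (hf : Function.Injective f) :
    (singularVectors (Q.comp f)).ncard =
      ∑ G ∈ S, (Nat.card F ^ finrank F (G.comap f) - 1) := by
  have : Finite E := Module.finite_of_finite F
  obtain ⟨hgen, hdisj, hcover⟩ := hS
  have hunion : singularVectors (Q.comp f) =
      ⋃ G ∈ (S : Set (Submodule F V)), ((G.comap f : Set E) \ {0}) := by
    ext x
    simp only [Set.mem_iUnion, exists_prop]
    constructor
    · rintro ⟨hx, hx0⟩
      obtain ⟨G, hG, hxG⟩ := hcover (f x) hx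
      exact ⟨G, hG, hxG, hx0⟩
    · rintro ⟨G, hG, hxG, hx0⟩
      exact ⟨(hgen G hG).1 (f x) hxG, hx0⟩
  have hpairwise : (S : Set (Submodule F V)).PairwiseDisjoint
      fun G => (G.comap f : Set E) \ {0} := by
    refine fun G hG G' hG' hne => Set.disjoint_left.2 fun x hx hx' => hx.2 ?_
    have hfx : f x ∈ G ⊓ G' := ⟨hx.1, hx'.1⟩
    rw [hdisj G hG G' hG' hne, mem_bot] at hfx
    exact (map_eq_zero_iff f hf).1 hfx
  rw [hunion, S.finite_toSet.ncard_biUnion (fun _ _ => Set.toFinite _) hpairwise,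
    finsum_mem_coe_finset]
  simp only [ncard_coe_sdiff_zero]

variable [FiniteDimensional F V]

theorem IsSpread.card_eq (hS : IsSpread Q S) (hQ : QuadNondeg Q) (hpos : 0 < wittIndex Q) {e : ℕ}
    (he : finrank F V = 2 * wittIndex Q + e) :
    S.card = Nat.card F ^ (wittIndex Q + e - 1) + 1 := by
  have hmember (G) (hG : G ∈ S) : Nat.card F ^ finrank F (G.comap LinearMap.id) - 1 =
      Nat.card F ^ wittIndex Q - 1 := by
    rw [comap_id, (hS.1 G hG).2]
  have hcount : (singularVectors Q).ncard = S.card * (Nat.card F ^ wittIndex Q - 1) :=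
    (hS.ncard_singularVectors_comp (f := LinearMap.id) Function.injective_id).trans
      (Finset.sum_const_nat hmember)
  have hlt : 1 < Nat.card F ^ wittIndex Q := Nat.one_lt_pow hpos.ne' Finite.one_lt_card
  refine Nat.eq_of_mul_eq_mul_left (Nat.sub_pos_of_lt hlt) ?_
  rw [← hQ.ncard_singularVectors he, hcount, mul_comm]

open scoped Classical in
theorem IsSpread.ncard_singularVectors_hyperplane (hS : IsSpread Q S) {W : Submodule F V}
    (hW : finrank F V = finrank F W + 1) :
    (singularVectors (Q.comp W.subtype)).ncard =
      (S.filter (· ≤ W)).card * (Nat.card F ^ wittIndex Q - 1) +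
        (S.filter (¬ · ≤ W)).card * (Nat.card F ^ (wittIndex Q - 1) - 1) := by
  have hinside : ∀ G ∈ S.filter (· ≤ W),
      Nat.card F ^ finrank F (G.comap W.subtype) - 1 = Nat.card F ^ wittIndex Q - 1 := by
    intro G hG
    obtain ⟨hGS, hGW⟩ := Finset.mem_filter.1 hG
    rw [(comapSubtypeEquivOfLe hGW).finrank_eq, (hS.1 G hGS).2]
  have hacross : ∀ G ∈ S.filter (¬ · ≤ W),
      Nat.card F ^ finrank F (G.comap W.subtype) - 1 = Nat.card F ^ (wittIndex Q - 1) - 1 := by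
    intro G hG
    obtain ⟨hGS, hGW⟩ := Finset.mem_filter.1 hG
    rw [← (hS.1 G hGS).2, ← finrank_comap_subtype_add_one_of_not_le hW hGW, Nat.add_sub_cancel]
  rw [hS.ncard_singularVectors_comp W.injective_subtype,
    ← Finset.sum_filter_add_sum_filter_not S (· ≤ W), Finset.sum_const_nat hinside,
    Finset.sum_const_nat hacross]

end Spread

theorem parabolic_spread_hyperbolic_section_general {F V : Type*} [Field F] [Finite F]
    [AddCommGroup V] [Module F V] [FiniteDimensional F V] {Q : QuadraticForm F V}
    {W : Submodule F V} (hW : finrank F V = finrank F W + 1)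
    (hWnd : QuadNondeg (Q.comp W.subtype)) (hpos : 0 < wittIndex Q)
    (hindex : wittIndex (Q.comp W.subtype) = wittIndex Q) {e : ℕ}
    (he : finrank F W = 2 * wittIndex Q + e) {S : Set (Submodule F V)} (hS : IsSpread Q S) :
    {G ∈ S | G ≤ W}.ncard = Nat.card F ^ e + 1 := by
  classical
  have : Finite V := Module.finite_of_finite F
  have : Finite (Submodule F V) := Finite.of_injective _ SetLike.coe_injective
  lift S to Finset (Submodule F V) using S.toFinite
  have hcard := hS.card_eq (hWnd.of_comp_subtype hindex) hpos (e := e + 1) (by omega)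
  have hcount := hS.ncard_singularVectors_hyperplane hW
  rw [hWnd.ncard_singularVectors (e := e) (by omega), hindex] at hcount
  rw [← S.card_filter_add_card_filter_not (· ≤ W)] at hcard
  have hncard : {G ∈ (S : Set (Submodule F V)) | G ≤ W}.ncard = (S.filter (· ≤ W)).card := by
    simp only [← Set.ncard_coe_finset, Finset.coe_filter, Finset.mem_coe]
  obtain ⟨m, hm⟩ := Nat.exists_eq_add_one.2 hpos
  rw [hm] at hcard hcount
  rw [hncard]
  refine eq_pow_add_one_of_add_eq_of_mul_add_mul_eq Finite.one_lt_card hcard ?_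
  simpa only [Nat.add_right_comm m 1 e, Nat.add_sub_cancel] using hcount.symm

theorem parabolic_spread_hyperbolic_section {F : Type*} [Field F] [Fintype F] (r : ℕ)
    (hr : 0 < r) (hreven : r % 2 = 0)
    (V : Type*) [AddCommGroup V] [Module F V] [FiniteDimensional F V]
    (hdim : Module.finrank F V = r + 3)
    (Q : QuadraticForm F V) (hQnd : QuadNondeg Q)
    (hdef : Module.finrank F V = 2 * wittIndex Q + 1)
    (S : Set (Submodule F V)) (hS : IsSpread Q S)
    (W : Submodule F V) (hW : Module.finrank F ↥W = r + 2)
    (hWnd : QuadNondeg (Q.comp W.subtype))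
    (hWdef : Module.finrank F ↥W = 2 * wittIndex (Q.comp W.subtype)) :
    {G ∈ S | G ≤ W}.ncard = 2 := by
  have hindex : wittIndex (Q.comp W.subtype) = wittIndex Q := by omega
  exact parabolic_spread_hyperbolic_section_general (e := 0) (by omega) hWnd (by omega) hindex
    (by omega) hS
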